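/- Let G be a reduced well-indumatched unicyclic graph of girth 11 with unique cycle C = v1 v2 ... v11 v1 such that for every i the rooted tree T_{v_i} is of Type (i) or of Type (ii). Then G is the cycle C_11. -/

import Mathlib

open SimpleGraph

/-- `M` is an induced matching of `G`: a set of edges of `G` such that no two distinct
edges of `M` share an endpoint or have endpoints joined by an edge of `G`. -/
def IsInducedMatching {V : Type*} (G : SimpleGraph V) (M : Set (Sym2 V)) : Prop :=
  M ⊆ G.edgeSet ∧
    ∀ e ∈ M, ∀ f ∈ M, e ≠ f → ∀ u ∈ e, ∀ v ∈ f, u ≠ v ∧ ¬ G.Adj u v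

/-- `M` is a maximal induced matching of `G`. -/
def IsMaximalInducedMatching {V : Type*} (G : SimpleGraph V) (M : Set (Sym2 V)) : Prop :=
  IsInducedMatching G M ∧
    ∀ N : Set (Sym2 V), IsInducedMatching G N → M ⊆ N → N = M

/-- `G` is well-indumatched: all of its maximal induced matchings have the same size. -/
def WellIndumatched {V : Type*} (G : SimpleGraph V) : Prop :=
  ∀ M N : Set (Sym2 V), IsMaximalInducedMatching G M → IsMaximalInducedMatching G N →
    M.ncard = N.ncard

/-- A graph is reduced if no two distinct vertices have the same open neighborhood. -/
def Reduced {V : Type*} (G : SimpleGraph V) : Prop :=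
  ∀ x y : V, G.neighborSet x = G.neighborSet y → x = y

/-- The component of `v` in `H` is of Type (i): it consists of the single vertex `v`. -/
def TypeI {V : Type*} (H : SimpleGraph V) (v : V) : Prop :=
  (H.connectedComponentMk v).supp = {v}

/-- The component of `v` in `H` is of Type (ii): it is a path of length `2` having `v`
as an endpoint. -/
def TypeII {V : Type*} (H : SimpleGraph V) (v : V) : Prop :=
  ∃ x y : V, x ≠ y ∧ v ≠ x ∧ v ≠ y ∧
    (H.connectedComponentMk v).supp = {v, x, y} ∧
    H.Adj v x ∧ H.Adj x y ∧ ¬ H.Adj v y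

/-!
If every edge conflicting with an induced matching `B` also conflicts with an induced matching `A`,
then a maximal induced matching `M ⊇ A` yields the induced matching `(M \ A) ∪ B`. In a
well-indumatched graph this forces `|B| ≤ |A|`, so an edge can never be traded for two edges.

Let `S` be the set of indices `i` for which a pendant path `vᵢ - x - y` is attached to the cycle.
If `i, i + 1 ∈ S`, then `vᵢvᵢ₊₁` can be traded for the outer edges of the two pendant paths. If
`i ∈ S` and `i + 1, i + 2 ∉ S`, then, next to `vᵢ₊₄vᵢ₊₅`, the edge `vᵢvᵢ₊₁` can be traded for `xy`
and `vᵢ₊₁vᵢ₊₂`. Hence `i ∈ S` implies `i + 1 ∉ S` and `i + 2 ∈ S`. As the cycle is odd, steps of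
length `2` lead from `i` to `i + 1`, so `S` is empty.
-/

/-- The edges `e` and `f` cannot both belong to an induced matching of `G` unless they are equal:
they share an endpoint or have endpoints joined by an edge. Every edge conflicts with itself. -/
def EdgeConflict {V : Type*} (G : SimpleGraph V) (e f : Sym2 V) : Prop :=
  ∃ u ∈ e, ∃ v ∈ f, u = v ∨ G.Adj u v

/-- `w - x - y` is a path of length `2` attached to the rest of `G` only at `w`. -/
def IsPendantPath {V : Type*} (G : SimpleGraph V) (w x y : V) : Prop :=
  w ≠ y ∧ G.neighborSet x = {w, y} ∧ G.neighborSet y = {x}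

section

variable {V : Type*} {G : SimpleGraph V}

section EdgeConflict

variable {e f : Sym2 V} {M : Set (Sym2 V)}

lemma edgeConflict_refl (e : Sym2 V) : EdgeConflict G e e :=
  ⟨e.out.1, e.out_fst_mem, e.out.1, e.out_fst_mem, Or.inl rfl⟩

lemma EdgeConflict.symm (h : EdgeConflict G e f) : EdgeConflict G f e := by
  obtain ⟨u, hu, v, hv, huv⟩ := h
  exact ⟨v, hv, u, hu, huv.imp Eq.symm Adj.symm⟩

lemma isInducedMatching_iff_pairwise :
    IsInducedMatching G M ↔ M ⊆ G.edgeSet ∧ M.Pairwise fun e f ↦ ¬ EdgeConflict G e f := by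
  simp only [IsInducedMatching, EdgeConflict, Set.Pairwise, not_exists, not_and, not_or]

lemma IsInducedMatching.eq_of_edgeConflict (hM : IsInducedMatching G M) (he : e ∈ M) (hf : f ∈ M)
    (hef : EdgeConflict G e f) : e = f :=
  by_contra fun hne ↦ (isInducedMatching_iff_pairwise.1 hM).2 he hf hne hef

lemma IsInducedMatching.subset {N : Set (Sym2 V)} (hM : IsInducedMatching G M) (hNM : N ⊆ M) :
    IsInducedMatching G N :=
  ⟨hNM.trans hM.1, fun e he f hf ↦ hM.2 e (hNM he) f (hNM hf)⟩

lemma IsInducedMatching.union {N : Set (Sym2 V)} (hM : IsInducedMatching G M)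
    (hN : IsInducedMatching G N) (hMN : ∀ e ∈ M, ∀ f ∈ N, ¬ EdgeConflict G e f) :
    IsInducedMatching G (M ∪ N) := by
  rw [isInducedMatching_iff_pairwise] at hM hN ⊢
  refine ⟨Set.union_subset hM.1 hN.1, Set.pairwise_union.2 ⟨hM.2, hN.2, ?_⟩⟩
  exact fun e he f hf _ ↦ ⟨hMN e he f hf, fun h ↦ hMN e he f hf h.symm⟩

lemma isInducedMatching_singleton (he : e ∈ G.edgeSet) : IsInducedMatching G {e} :=
  isInducedMatching_iff_pairwise.2 ⟨Set.singleton_subset_iff.2 he, Set.pairwise_singleton _ _⟩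

lemma IsInducedMatching.insert (hM : IsInducedMatching G M) (he : e ∈ G.edgeSet)
    (heM : ∀ f ∈ M, ¬ EdgeConflict G e f) : IsInducedMatching G (insert e M) :=
  (isInducedMatching_singleton he).union hM (by simpa using heM)

lemma IsInducedMatching.exists_isMaximalInducedMatching_superset [Finite V]
    (hM : IsInducedMatching G M) : ∃ N, IsMaximalInducedMatching G N ∧ M ⊆ N := by
  obtain ⟨N, hMN, hN⟩ := Finite.exists_le_maximal hM
  exact ⟨N, ⟨hN.prop, fun N' hN' hNN' ↦ (hN.eq_of_le hN' hNN').symm⟩, hMN⟩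

end EdgeConflict

section Exchange

variable [Finite V] {A B K : Set (Sym2 V)} {a b c : Sym2 V}

lemma WellIndumatched.ncard_le (hG : WellIndumatched G) (hA : IsInducedMatching G A)
    (hB : IsInducedMatching G B)
    (hBA : ∀ e ∈ G.edgeSet, ∀ f ∈ B, EdgeConflict G e f → ∃ f' ∈ A, EdgeConflict G e f') :
    B.ncard ≤ A.ncard := by
  obtain ⟨M, hM, hAM⟩ := hA.exists_isMaximalInducedMatching_superset
  have no_conflict : ∀ f ∈ B, ∀ e ∈ M \ A, ¬ EdgeConflict G f e := by
    rintro f hf e ⟨heM, heA⟩ hfe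
    obtain ⟨f', hf', hef'⟩ := hBA e (hM.1.1 heM) f hf hfe.symm
    exact heA (hM.1.eq_of_edgeConflict heM (hAM hf') hef' ▸ hf')
  have hdisj : Disjoint B (M \ A) :=
    Set.disjoint_left.2 fun f hfB hfM ↦ no_conflict f hfB f hfM (edgeConflict_refl f)
  obtain ⟨N, hN, hBN⟩ := (hB.union (hM.1.subset Set.sdiff_subset)
    no_conflict).exists_isMaximalInducedMatching_superset
  have hcard : B.ncard + (M \ A).ncard ≤ A.ncard + (M \ A).ncard := calc
    B.ncard + (M \ A).ncard = (B ∪ M \ A).ncard := (Set.ncard_union_eq hdisj).symm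
    _ ≤ N.ncard := Set.ncard_le_ncard hBN
    _ = M.ncard := hG N M hN hM
    _ = A.ncard + (M \ A).ncard := by rw [add_comm, Set.ncard_sdiff_add_ncard_of_subset hAM]
  exact Nat.le_of_add_le_add_right hcard

lemma not_wellIndumatched_of_exchange (hK : IsInducedMatching G K) (ha : a ∈ G.edgeSet)
    (hb : b ∈ G.edgeSet) (hc : c ∈ G.edgeSet) (haK : ∀ k ∈ K, ¬ EdgeConflict G a k)
    (hbK : ∀ k ∈ K, ¬ EdgeConflict G b k) (hcK : ∀ k ∈ K, ¬ EdgeConflict G c k)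
    (hbc : ¬ EdgeConflict G b c)
    (h : ∀ e ∈ G.edgeSet, EdgeConflict G e b ∨ EdgeConflict G e c →
      ∃ k ∈ insert a K, EdgeConflict G e k) :
    ¬ WellIndumatched G := by
  intro hG
  have hbcK : ∀ k ∈ insert c K, ¬ EdgeConflict G b k := Set.forall_mem_insert.2 ⟨hbc, hbK⟩
  have hle : (insert b (insert c K)).ncard ≤ (insert a K).ncard := by
    refine hG.ncard_le (hK.insert ha haK) ((hK.insert hc hcK).insert hb hbcK) ?_
    rintro e he f (rfl | rfl | hf) hef
    · exact h e he (Or.inl hef)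
    · exact h e he (Or.inr hef)
    · exact ⟨f, Or.inr hf, hef⟩
  have hb_notMem : b ∉ insert c K := fun hmem ↦ hbcK b hmem (edgeConflict_refl b)
  have hc_notMem : c ∉ K := fun hmem ↦ hcK c hmem (edgeConflict_refl c)
  rw [Set.ncard_insert_of_notMem hb_notMem, Set.ncard_insert_of_notMem hc_notMem] at hle
  have := Set.ncard_insert_le a K
  omega

end Exchange

section PendantPath

variable {w x y : V}

lemma IsPendantPath.adj_inner (h : IsPendantPath G w x y) : G.Adj x y := by
  rw [← mem_neighborSet, h.2.1]
  exact Or.inr rfl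

lemma IsPendantPath.adj_root (h : IsPendantPath G w x y) : G.Adj x w := by
  rw [← mem_neighborSet, h.2.1]
  exact Or.inl rfl

lemma IsPendantPath.edgeConflict_iff (h : IsPendantPath G w x y) {e : Sym2 V}
    (he : e ∈ G.edgeSet) : EdgeConflict G e s(x, y) ↔ w ∈ e ∨ x ∈ e := by
  obtain ⟨-, hx, hy⟩ := h
  simp only [Set.ext_iff, mem_neighborSet, Set.mem_insert_iff, Set.mem_singleton_iff] at hx hy
  induction e with
  | _ a b =>
    rw [mem_edgeSet] at he
    simp only [EdgeConflict, Sym2.mem_iff, exists_eq_or_imp, exists_eq_left]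
    grind [SimpleGraph.Adj.symm]

lemma IsPendantPath.edgeConflict_of_mem (h : IsPendantPath G w x y) {e f : Sym2 V}
    (he : e ∈ G.edgeSet) (hwf : w ∈ f) (hef : EdgeConflict G e s(x, y)) : EdgeConflict G e f := by
  rcases (h.edgeConflict_iff he).1 hef with hwe | hxe
  · exact ⟨w, hwe, w, hwf, Or.inl rfl⟩
  · exact ⟨x, hxe, w, hwf, Or.inr h.adj_root⟩

lemma IsPendantPath.not_edgeConflict {w' x' y' : V} (h : IsPendantPath G w x y)
    (h' : IsPendantPath G w' x' y') (hadj : G.Adj w w') (hxw' : x ≠ w') :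
    ¬ EdgeConflict G s(x, y) s(x', y') := by
  have eq_x {z : V} (hz : G.Adj y z) : z = x := h.2.2.subset hz
  have eq_w_or_y {z : V} (hz : G.Adj x z) : z = w ∨ z = y := h.2.1.subset hz
  have hyw' : y ≠ w' := fun hy ↦ h.adj_root.ne (eq_x (hy ▸ hadj.symm)).symm
  rw [h'.edgeConflict_iff h.adj_inner, Sym2.mem_iff, Sym2.mem_iff]
  rintro ((hx | hy) | (rfl | rfl))
  · exact hxw' hx.symm
  · exact hyw' hy.symm
  · exact (eq_w_or_y h'.adj_root).elim hadj.ne' hyw'.symm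
  · exact hxw' (eq_x h'.adj_root).symm

variable [Finite V]

-- Trade the edge `w w'` for the two outer edges of the pendant paths.
lemma IsPendantPath.not_wellIndumatched_of_adj {w' x' y' : V} (h : IsPendantPath G w x y)
    (h' : IsPendantPath G w' x' y') (hadj : G.Adj w w') (hxw' : x ≠ w') :
    ¬ WellIndumatched G := by
  refine not_wellIndumatched_of_exchange (K := ∅) (a := s(w, w')) (by simp [IsInducedMatching])
    hadj h.adj_inner h'.adj_inner (by simp) (by simp) (by simp)
    (h.not_edgeConflict h' hadj hxw') ?_
  rintro e he (hef | hef)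
  · exact ⟨_, Or.inl rfl, h.edgeConflict_of_mem he (Sym2.mem_mk_left w w') hef⟩
  · exact ⟨_, Or.inl rfl, h'.edgeConflict_of_mem he (Sym2.mem_mk_right w w') hef⟩

-- In the presence of `ψ 4 ψ 5`, trade the edge `ψ 0 ψ 1` for the edges `x y` and `ψ 1 ψ 2`.
lemma IsPendantPath.not_wellIndumatched_of_pathGraph_embedding (ψ : pathGraph 6 ↪g G)
    (h : IsPendantPath G (ψ 0) x y) (hx : x ∉ Set.range ψ)
    (h₁ : G.neighborSet (ψ 1) ⊆ {ψ 0, ψ 2}) (h₂ : G.neighborSet (ψ 2) ⊆ {ψ 1, ψ 3}) :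
    ¬ WellIndumatched G := by
  have edge_mem {i j : Fin 6} (hij : i.val + 1 = j) : s(ψ i, ψ j) ∈ G.edgeSet :=
    ψ.map_adj_iff.2 (pathGraph_adj.2 (Or.inl hij))
  have not_conflict {i j : Fin 6} (hij : i.val + 1 = j) (hi : i ≠ 0) :
      ¬ EdgeConflict G s(x, y) s(ψ i, ψ j) := by
    intro hc
    rcases (h.edgeConflict_iff (edge_mem hij)).1 hc.symm with h0 | hx'
    · simp only [Sym2.mem_iff, ψ.injective.eq_iff] at h0
      grind
    · simp only [Sym2.mem_iff] at hx'
      grind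
  refine not_wellIndumatched_of_exchange (K := {s(ψ 4, ψ 5)}) (a := s(ψ 0, ψ 1)) (b := s(x, y))
    (c := s(ψ 1, ψ 2)) (isInducedMatching_singleton (edge_mem rfl)) (edge_mem rfl)
    h.adj_inner (edge_mem rfl) ?_ ?_ ?_ ?_ ?_
  · simp [EdgeConflict, pathGraph_adj]
  · simpa using not_conflict (i := 4) rfl (by decide)
  · simp [EdgeConflict, pathGraph_adj]
  · exact not_conflict rfl (by decide)
  · rintro e he (hef | hef)
    · exact ⟨_, Or.inl rfl, h.edgeConflict_of_mem he (Sym2.mem_mk_left _ _) hef⟩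
    · obtain ⟨u, hue, z, hz, huz⟩ := hef
      have hu : u = ψ 0 ∨ u = ψ 1 ∨ u = ψ 2 ∨ u = ψ 3 := by
        rcases Sym2.mem_iff.1 hz with rfl | rfl <;> rcases huz with rfl | huz
        · exact Or.inr (Or.inl rfl)
        · grind [h₁ huz.symm]
        · exact Or.inr (Or.inr (Or.inl rfl))
        · grind [h₂ huz.symm]
      rcases hu with rfl | rfl | rfl | rfl
      · exact ⟨_, Or.inl rfl, ψ 0, hue, ψ 0, by simp⟩
      · exact ⟨_, Or.inl rfl, ψ 1, hue, ψ 1, by simp⟩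
      · exact ⟨_, Or.inl rfl, ψ 2, hue, ψ 1, by simp [pathGraph_adj]⟩
      · exact ⟨_, Or.inr rfl, ψ 3, hue, ψ 4, by simp [pathGraph_adj]⟩

end PendantPath

section CycleGraph

lemma add_mem_of_forall_add_add_mem {A : Type*} [AddMonoid A] {S : Set A} {a g : A}
    (hg : Odd (addOrderOf g)) (hS : ∀ b ∈ S, b + g + g ∈ S) (ha : a ∈ S) : a + g ∈ S := by
  have hiter (m : ℕ) : a + (2 * m) • g ∈ S := by
    induction m with
    | zero => simpa using ha
    | succ m ih => simpa [mul_add, add_nsmul, two_nsmul, add_assoc] using hS _ ih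
  obtain ⟨k, hk⟩ := hg
  have hmem := hiter (k + 1)
  rwa [show 2 * (k + 1) = addOrderOf g + 1 by omega, add_nsmul, addOrderOf_nsmul_eq_zero, zero_add,
    one_nsmul] at hmem

variable {n : ℕ} [NeZero n]

lemma cycleGraph_adj_iff_add (hn : 2 ≤ n) {i j : Fin n} :
    (cycleGraph n).Adj i j ↔ j = i + 1 ∨ i = j + 1 := by
  obtain ⟨n, rfl⟩ := Nat.exists_eq_add_of_le' hn
  rw [cycleGraph_adj, sub_eq_iff_eq_add', sub_eq_iff_eq_add', or_comm]

lemma add_castLE_eq_add_castLE_add_one_iff {m : ℕ} (hmn : m < n) (i : Fin n) {j k : Fin m} :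
    i + Fin.castLE hmn.le k = i + Fin.castLE hmn.le j + 1 ↔ j.val + 1 = k.val := by
  have hj : (Fin.castLE hmn.le j).val + 1 < n := (Nat.succ_le_iff.2 j.isLt).trans_lt hmn
  rw [add_assoc, add_right_inj, Fin.ext_iff, Fin.val_add_one_of_lt' hj, eq_comm]
  rfl

/-- The arc of `m` consecutive vertices of a longer cycle starting at `i`. -/
def cycleGraphArc {m : ℕ} (hmn : m < n) (i : Fin n) : pathGraph m ↪g cycleGraph n where
  toFun j := i + Fin.castLE hmn.le j
  inj' := (add_right_injective i).comp (Fin.castLE_injective hmn.le)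
  map_rel_iff' {j k} := by
    have hn : 2 ≤ n := Nat.succ_le_iff.2 ((Nat.succ_le_iff.2 j.pos).trans_lt hmn)
    exact (cycleGraph_adj_iff_add hn).trans <| (or_congr
      (add_castLE_eq_add_castLE_add_one_iff hmn i)
      (add_castLE_eq_add_castLE_add_one_iff hmn i)).trans pathGraph_adj.symm

lemma cycleGraphArc_zero {m : ℕ} [NeZero m] (hmn : m < n) (i : Fin n) :
    cycleGraphArc hmn i 0 = i :=
  add_eq_left.2 (Fin.ext rfl)

lemma cycleGraphArc_eq_add_one {m : ℕ} (hmn : m < n) (i : Fin n) {j k : Fin m}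
    (hjk : j.val + 1 = k.val) : cycleGraphArc hmn i k = cycleGraphArc hmn i j + 1 :=
  (add_castLE_eq_add_castLE_add_one_iff hmn i).2 hjk

end CycleGraph

section ClosedWalk

variable {v : V} {C : G.Walk v v}

lemma getVert_val_add_one [NeZero C.length] (i : Fin C.length) :
    C.getVert (i + 1).val = C.getVert (i.val + 1) := by
  rcases (Nat.succ_le_iff.2 i.isLt).lt_or_eq with hi | hi
  · rw [Fin.val_add_one_of_lt' hi]
  · rw [Nat.succ_eq_add_one] at hi
    have : (i + 1).val = 0 := by simp [Fin.val_add, hi]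
    rw [this, hi, C.getVert_length, C.getVert_zero]

lemma getVert_inj (hC : C.IsCycle) {i j : Fin C.length} :
    C.getVert i = C.getVert j ↔ i = j := by
  refine ⟨fun h ↦ Fin.ext (hC.getVert_injOn' ?_ ?_ h), fun h ↦ h ▸ rfl⟩ <;>
    exact Nat.le_sub_one_of_lt (Fin.isLt _)

lemma mk_getVert_mem_edges_iff (hC : C.IsCycle) {i j : Fin C.length} :
    s(C.getVert i, C.getVert j) ∈ C.edges ↔ (cycleGraph C.length).Adj i j := by
  have : NeZero C.length := ⟨by linarith [hC.three_le_length]⟩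
  have exists_iff : s(C.getVert i, C.getVert j) ∈ C.edges ↔
      ∃ k : Fin C.length,
        s(C.getVert k, C.getVert (k + 1 : Fin _)) = s(C.getVert i, C.getVert j) := by
    simp only [C.mk_mem_edges_iff_exists, Fin.exists_iff, getVert_val_add_one, exists_prop]
  rw [exists_iff, cycleGraph_adj_iff_add (by linarith [hC.three_le_length])]
  simp only [Sym2.eq_iff, getVert_inj hC]
  grind

lemma exists_cycleGraph_embedding (hC : C.IsCycle) (h : C.IsChordless) :
    ∃ φ : cycleGraph C.length ↪g G, Set.range φ = {x | x ∈ C.support} := by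
  have : NeZero C.length := ⟨by linarith [hC.three_le_length]⟩
  refine ⟨⟨⟨fun i ↦ C.getVert i, fun i j hij ↦ (getVert_inj hC).1 hij⟩, fun {i j} ↦ ?_⟩,
    Set.ext fun x ↦ ⟨?_, fun hx ↦ ?_⟩⟩
  · rw [← mk_getVert_mem_edges_iff hC]
    exact ⟨h.mem_edges (C.getVert_mem_support i) (C.getVert_mem_support j), C.adj_of_mem_edges⟩
  · rintro ⟨i, rfl⟩
    exact C.getVert_mem_support i
  · obtain ⟨k, rfl, hk⟩ := Walk.mem_support_iff_exists_getVert.1 hx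
    obtain hk | rfl := hk.lt_or_eq
    · exact ⟨⟨k, hk⟩, rfl⟩
    · exact ⟨0, C.getVert_zero.trans C.getVert_length.symm⟩

end ClosedWalk

section CycleWithPendantPaths

/-- A path of length `2` is attached to `G` at `w`, with its middle vertex outside `s`. -/
def HasPendantPath {V : Type*} (G : SimpleGraph V) (s : Set V) (w : V) : Prop :=
  ∃ x y, x ∉ s ∧ IsPendantPath G w x y

variable {n : ℕ} [NeZero n] {φ : cycleGraph n ↪g G} {i : Fin n}

lemma neighborSet_cycleGraph_embedding_subset (hn : 2 ≤ n)
    (h : G.neighborSet (φ (i + 1)) ⊆ Set.range φ) :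
    G.neighborSet (φ (i + 1)) ⊆ {φ i, φ (i + 1 + 1)} := by
  intro z hz
  obtain ⟨j, rfl⟩ := h hz
  rw [mem_neighborSet, φ.map_adj_iff, cycleGraph_adj_iff_add hn, add_left_inj] at hz
  obtain rfl | rfl := hz
  · exact Or.inr rfl
  · exact Or.inl rfl

variable [Finite V]

lemma HasPendantPath.not_add_one (hG : WellIndumatched G) (hn : 2 ≤ n)
    (hi : HasPendantPath G (Set.range φ) (φ i)) :
    ¬ HasPendantPath G (Set.range φ) (φ (i + 1)) := by
  obtain ⟨x, y, hx, h⟩ := hi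
  rintro ⟨x', y', -, h'⟩
  refine h.not_wellIndumatched_of_adj h' (φ.map_adj_iff.2 ?_) (fun hxi ↦ hx ⟨_, hxi.symm⟩) hG
  exact (cycleGraph_adj_iff_add hn).2 (Or.inl rfl)

lemma HasPendantPath.not_neighborSet_subset (hG : WellIndumatched G) (hn : 7 ≤ n)
    (hi : HasPendantPath G (Set.range φ) (φ i))
    (h₁ : G.neighborSet (φ (i + 1)) ⊆ Set.range φ) :
    ¬ G.neighborSet (φ (i + 1 + 1)) ⊆ Set.range φ := by
  intro h₂
  obtain ⟨x, y, hx, h⟩ := hi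
  have h₁' := neighborSet_cycleGraph_embedding_subset (by omega) h₁
  have h₂' := neighborSet_cycleGraph_embedding_subset (by omega) h₂
  let ψ : pathGraph 6 ↪g G := φ.comp (cycleGraphArc hn i)
  have ψ_zero : ψ 0 = φ i := congrArg φ (cycleGraphArc_zero hn i)
  have ψ_succ {j k : Fin 6} {l : Fin n} (hj : ψ j = φ l) (hjk : j.val + 1 = k.val) :
      ψ k = φ (l + 1) := by
    obtain rfl : cycleGraphArc hn i j = l := φ.injective hj
    exact congrArg φ (cycleGraphArc_eq_add_one hn i hjk)
  have ψ_one : ψ 1 = φ (i + 1) := ψ_succ ψ_zero rfl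
  have ψ_two : ψ 2 = φ (i + 1 + 1) := ψ_succ ψ_one rfl
  have ψ_three : ψ 3 = φ (i + 1 + 1 + 1) := ψ_succ ψ_two rfl
  rw [← ψ_zero, ← ψ_one, ← ψ_two] at h₁'
  rw [← ψ_one, ← ψ_two, ← ψ_three] at h₂'
  have hxψ : x ∉ Set.range ψ := fun hmem ↦ hx (Set.range_comp_subset_range _ φ hmem)
  exact (ψ_zero ▸ h).not_wellIndumatched_of_pathGraph_embedding ψ hxψ h₁' h₂' hG

theorem not_hasPendantPath_of_odd (hG : WellIndumatched G) (hodd : Odd n) (hn : 7 ≤ n)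
    (h : ∀ i, HasPendantPath G (Set.range φ) (φ i) ∨ G.neighborSet (φ i) ⊆ Set.range φ)
    (i : Fin n) : ¬ HasPendantPath G (Set.range φ) (φ i) := by
  intro hi
  have hodd' : Odd (addOrderOf (1 : Fin n)) :=
    hodd.of_dvd_nat (by simpa using addOrderOf_dvd_card (x := (1 : Fin n)))
  refine hi.not_add_one hG (by omega) (add_mem_of_forall_add_add_mem
    (S := {j | HasPendantPath G (Set.range φ) (φ j)}) hodd' (fun j hj ↦ ?_) hi)
  have h₁ := (h (j + 1)).resolve_left (hj.not_add_one hG (by omega))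
  exact (h (j + 1 + 1)).resolve_right (hj.not_neighborSet_subset hG hn h₁)

end CycleWithPendantPaths

section Unicyclic

variable {v : V} {C : G.Walk v v}

-- The first edge of a path in `G - E(C)` between distinct vertices of `C` lies on a cycle of `G`.
lemma eq_of_reachable_deleteEdges (huniq : ∀ (w : V) (D : G.Walk w w), D.IsCycle →
      D.edges ⊆ C.edges) {a b : V} (ha : a ∈ C.support) (hb : b ∈ C.support)
    (hr : (G.deleteEdges {e | e ∈ C.edges}).Reachable a b) : a = b := by
  classical
  obtain ⟨p, hp⟩ := hr.exists_isPath
  cases p with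
  | nil => rfl
  | @cons _ x _ hax p =>
    exfalso
    rw [Walk.cons_isPath_iff] at hp
    obtain ⟨hadj, hnotMem⟩ := deleteEdges_adj.1 hax
    have reachable_tail : (G.deleteEdges {s(a, x)}).Reachable x b := by
      refine reachable_deleteEdges_iff_exists_walk.2
        ⟨p.mapLe (deleteEdges_le _), fun hmem ↦ hp.2 ?_⟩
      rw [Walk.edges_mapLe_eq_edges] at hmem
      exact p.fst_mem_support_of_mem_edges hmem
    have reachable_cycle (y : V) (hy : y ∈ C.support) :
        (G.deleteEdges {s(a, x)}).Reachable v y :=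
      reachable_deleteEdges_iff_exists_walk.2
        ⟨C.takeUntil y hy, fun hmem ↦ hnotMem (C.edges_takeUntil_subset_edges hy hmem)⟩
    have reachable_ax : (G.deleteEdges {s(a, x)}).Reachable a x :=
      ((reachable_cycle a ha).symm.trans (reachable_cycle b hb)).trans reachable_tail.symm
    have not_isBridge : ¬ G.IsBridge s(a, x) := fun h ↦ isBridge_iff.1 h reachable_ax
    rw [isBridge_iff_forall_cycle_notMem hadj] at not_isBridge
    push Not at not_isBridge
    obtain ⟨u, D, hD, hmem⟩ := not_isBridge
    exact hnotMem (huniq u D hD hmem)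

lemma isChordless_of_forall_cycle (huniq : ∀ (w : V) (D : G.Walk w w), D.IsCycle →
    D.edges ⊆ C.edges) : C.IsChordless := by
  refine Walk.isChordless_iff_forall_mem_edges.2 fun a b ha hb hab ↦ by_contra fun hnotMem ↦ ?_
  have hreach : (G.deleteEdges {e | e ∈ C.edges}).Reachable a b :=
    (deleteEdges_adj.2 ⟨hab, hnotMem⟩).reachable
  exact hab.ne (eq_of_reachable_deleteEdges huniq ha hb hreach)

lemma deleteEdges_adj_iff_of_notMem_support {x z : V} (hx : x ∉ C.support) :
    (G.deleteEdges {e | e ∈ C.edges}).Adj x z ↔ G.Adj x z :=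
  deleteEdges_adj.trans (and_iff_left fun hmem ↦ hx (C.fst_mem_support_of_mem_edges hmem))

variable {w : V}

lemma TypeI.neighborSet_subset (h : TypeI (G.deleteEdges {e | e ∈ C.edges}) w) :
    G.neighborSet w ⊆ {x | x ∈ C.support} := by
  intro z hz
  by_contra hzC
  have hwz : (G.deleteEdges {e | e ∈ C.edges}).Adj w z :=
    deleteEdges_adj.2 ⟨hz, fun hmem ↦ hzC (C.snd_mem_support_of_mem_edges hmem)⟩
  have hzw : z ∈ (SimpleGraph.connectedComponentMk _ w).supp :=
    ConnectedComponent.mem_supp_of_adj_mem_supp _ rfl hwz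
  rw [h] at hzw
  exact hwz.ne' hzw

lemma TypeII.hasPendantPath (huniq : ∀ (w : V) (D : G.Walk w w), D.IsCycle →
    D.edges ⊆ C.edges) (hw : w ∈ C.support) (h : TypeII (G.deleteEdges {e | e ∈ C.edges}) w) :
    HasPendantPath G {x | x ∈ C.support} w := by
  obtain ⟨x, y, -, hwx, hwy, hsupp, hadj_wx, hadj_xy, hnadj_wy⟩ := h
  have hxC : x ∉ C.support := fun hx ↦
    hwx (eq_of_reachable_deleteEdges huniq hw hx hadj_wx.reachable)
  have hyC : y ∉ C.support := fun hy ↦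
    hwy (eq_of_reachable_deleteEdges huniq hw hy (hadj_wx.reachable.trans hadj_xy.reachable))
  have mem_of_adj {u z : V} (hu : u ∈ ({w, x, y} : Set V))
      (hz : (G.deleteEdges {e | e ∈ C.edges}).Adj u z) : z = w ∨ z = x ∨ z = y :=
    hsupp.subset (ConnectedComponent.mem_supp_of_adj_mem_supp _ (hsupp.superset hu) hz)
  refine ⟨x, y, hxC, hwy, ?_, ?_⟩ <;> ext z
  · rw [mem_neighborSet, ← deleteEdges_adj_iff_of_notMem_support hxC]
    refine ⟨fun hz ↦ ?_, ?_⟩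
    · obtain rfl | rfl | rfl := mem_of_adj (by simp) hz
      exacts [Or.inl rfl, (hz.ne rfl).elim, Or.inr rfl]
    · rintro (rfl | rfl)
      exacts [hadj_wx.symm, hadj_xy]
  · rw [mem_neighborSet, ← deleteEdges_adj_iff_of_notMem_support hyC]
    refine ⟨fun hz ↦ ?_, ?_⟩
    · obtain rfl | rfl | rfl := mem_of_adj (by simp) hz
      exacts [(hnadj_wy hz.symm).elim, rfl, (hz.ne rfl).elim]
    · rintro rfl
      exact hadj_xy.symm

end Unicyclic

lemma surjective_of_neighborSet_subset {W : Type*} [Nonempty W] {φ : W → V} (hconn : G.Preconnected)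
    (h : ∀ i, G.neighborSet (φ i) ⊆ Set.range φ) : Function.Surjective φ := by
  obtain ⟨i⟩ := ‹Nonempty W›
  refine fun z ↦ by_contra fun hz ↦ ?_
  obtain ⟨p⟩ := hconn (φ i) z
  obtain ⟨d, -, ⟨j, hj⟩, hd⟩ := p.exists_boundary_dart (Set.range φ) ⟨i, rfl⟩ hz
  exact hd (h j (hj ▸ d.adj))

end

theorem stmt_12_general {V : Type*} [Finite V] (G : SimpleGraph V)
    (hWIM : WellIndumatched G) (hconn : G.Connected)
    (v : V) (C : G.Walk v v) (hC : C.IsCycle) (hodd : Odd C.length) (hlen : 7 ≤ C.length)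
    (huniq : ∀ (w : V) (D : G.Walk w w), D.IsCycle → D.edges ⊆ C.edges)
    (htypes : ∀ w ∈ C.support,
      TypeI (G.deleteEdges {e | e ∈ C.edges}) w ∨
        TypeII (G.deleteEdges {e | e ∈ C.edges}) w) :
    Nonempty (G ≃g cycleGraph C.length) := by
  have : NeZero C.length := ⟨by omega⟩
  obtain ⟨φ, hφ⟩ := exists_cycleGraph_embedding hC (isChordless_of_forall_cycle huniq)
  have hφC (i : Fin C.length) : φ i ∈ C.support := hφ.subset ⟨i, rfl⟩
  have type_cases (i : Fin C.length) : HasPendantPath G (Set.range φ) (φ i) ∨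
      G.neighborSet (φ i) ⊆ Set.range φ := by
    rw [hφ]
    exact (htypes _ (hφC i)).symm.imp (TypeII.hasPendantPath huniq (hφC i))
      TypeI.neighborSet_subset
  have neighborSet_subset (i : Fin C.length) : G.neighborSet (φ i) ⊆ Set.range φ :=
    (type_cases i).resolve_left (not_hasPendantPath_of_odd hWIM hodd hlen type_cases i)
  have hsurj : Function.Surjective φ :=
    surjective_of_neighborSet_subset hconn.preconnected neighborSet_subset
  exact ⟨(RelIso.ofSurjective φ hsurj).symm⟩

/-- A reduced well-indumatched unicyclic graph of girth `11`, all of whose rooted trees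
`T_{v_i}` (components of `G − E(C)` rooted at the cycle vertices) are of Type (i) or
Type (ii), is the cycle `C₁₁`. -/
theorem stmt_12 {V : Type*} [Fintype V] (G : SimpleGraph V)
    (hred : Reduced G) (hWIM : WellIndumatched G) (hconn : G.Connected)
    (hgirth : G.girth = 11)
    (v : V) (C : G.Walk v v) (hC : C.IsCycle) (hlen : C.length = 11)
    (huniq : ∀ (w : V) (D : G.Walk w w), D.IsCycle → ∀ e, e ∈ D.edges ↔ e ∈ C.edges)
    (htypes : ∀ w ∈ C.support,
      TypeI (G.deleteEdges {e | e ∈ C.edges}) w ∨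
        TypeII (G.deleteEdges {e | e ∈ C.edges}) w) :
    Nonempty (G ≃g SimpleGraph.cycleGraph 11) :=
  hlen ▸ stmt_12_general G hWIM hconn v C hC (hlen ▸ by decide) (hlen ▸ by decide)
    (fun w D hD e ↦ (huniq w D hD e).1) htypes
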